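/- Let R be the quotient of ℂ⟨e1,e2,e3⟩ by the two-sided ideal generated by e1e2 + e2e1 − e3, e1e3 + e3e1 − e2, and e2e3 + e3e2 − e1. Then h_0 = 1, h_1 = h_2 = 0, h_3 = 1, and h_n = 0 for all n ≥ 4. -/

import Mathlib

open CategoryTheory FreeAlgebra

/-- `Ext^m_R(ℂ,ℂ)` as a ℂ-module, where `ℂ` is an `R`-module via the augmentation `ε`. -/
noncomputable def extC (R : Type) [Ring R] [Algebra ℂ R] (ε : R →ₐ[ℂ] ℂ) (m : ℕ) :
    ModuleCat ℂ :=
  letI : Module R ℂ := Module.compHom ℂ ε.toRingHom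
  ((Ext ℂ (ModuleCat R) m).obj (Opposite.op (ModuleCat.of R ℂ))).obj (ModuleCat.of R ℂ)

/-- `h_m = dim_ℂ Ext^m_R(ℂ,ℂ)`. -/
noncomputable def extDim (R : Type) [Ring R] [Algebra ℂ R] (ε : R →ₐ[ℂ] ℂ) (m : ℕ) : ℕ :=
  Module.finrank ℂ (extC R ε m)

/-- Relations: `e1e2 + e2e1 = e3`, `e1e3 + e3e1 = e2`, `e2e3 + e3e2 = e1`. -/
inductive CRel : FreeAlgebra ℂ (Fin 3) → FreeAlgebra ℂ (Fin 3) → Prop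
  | r12 : CRel (ι ℂ 0 * ι ℂ 1 + ι ℂ 1 * ι ℂ 0) (ι ℂ 2)
  | r13 : CRel (ι ℂ 0 * ι ℂ 2 + ι ℂ 2 * ι ℂ 0) (ι ℂ 1)
  | r23 : CRel (ι ℂ 1 * ι ℂ 2 + ι ℂ 2 * ι ℂ 1) (ι ℂ 0)


namespace BN
set_option maxSynthPendingDepth 6
open Polynomial

abbrev R := RingQuot CRel
abbrev D := Polynomial (Polynomial ℂ)
abbrev V := ℤ →₀ D

noncomputable def e (i : Fin 3) : R := RingQuot.mkAlgHom ℂ CRel (ι ℂ i)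
noncomputable def up : R := e 0 + e 1
noncomputable def um : R := e 0 - e 1
noncomputable def h : R := e 2

lemma r12 : e 0 * e 1 + e 1 * e 0 = e 2 := by
  simpa [e] using RingQuot.mkAlgHom_rel ℂ CRel.r12
lemma r13 : e 0 * e 2 + e 2 * e 0 = e 1 := by
  simpa [e] using RingQuot.mkAlgHom_rel ℂ CRel.r13
lemma r23 : e 1 * e 2 + e 2 * e 1 = e 0 := by
  simpa [e] using RingQuot.mkAlgHom_rel ℂ CRel.r23

lemma h_up : h * up = up * (1 - h) := by
  have h1 := r13
  have h2 := r23
  unfold h up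
  rw [mul_sub, mul_one, mul_add, add_mul]
  rw [eq_sub_iff_add_eq]
  calc _ = (e 0 * e 2 + e 2 * e 0) + (e 1 * e 2 + e 2 * e 1) := by abel
    _ = _ := by rw [h1, h2]; abel
lemma h_um : h * um = um * (-1 - h) := by
  have h1 := r13
  have h2 := r23
  unfold h um
  have h3 : (e 0 - e 1) * -1 = e 1 - e 0 := by rw [mul_neg_one, neg_sub]
  rw [mul_sub _ (-1), h3, mul_sub, sub_mul]
  rw [eq_sub_iff_add_eq]
  calc _ = (e 0 * e 2 + e 2 * e 0) - (e 1 * e 2 + e 2 * e 1) := by abel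
    _ = _ := by rw [h1, h2]
lemma upsq : up * up = um * um + h + h := by
  have h1 := r12
  unfold h um up
  rw [← h1, mul_add, sub_mul, mul_sub, mul_sub, add_mul, add_mul]
  abel

noncomputable def z0 : R := um * um + h * h + h

lemma z0_um : z0 * um = um * z0 := by
  have h1 := h_um
  unfold z0
  have h2 : h * h * um = um * (-1 - h) * (-1 - h) := by
    rw [mul_assoc, h1, ← mul_assoc, h1]
  rw [add_mul, add_mul, h2, h1]
  simp only [mul_sub, sub_mul, mul_add, add_mul, mul_neg, neg_mul, mul_one, one_mul, mul_assoc]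
  abel
lemma z0_up : z0 * up = up * z0 := by
  have h1 := h_up
  have hz : z0 = up * up + h * h - h := by rw [upsq]; unfold z0; abel
  rw [hz]
  have h2 : h * h * up = up * (1 - h) * (1 - h) := by
    rw [mul_assoc, h1, ← mul_assoc, h1]
  rw [sub_mul, add_mul, h2, h1]
  simp only [mul_sub, sub_mul, mul_add, add_mul, mul_neg, neg_mul, mul_one, one_mul, mul_assoc]
  abel
lemma z0_h : z0 * h = h * z0 := by
  have h1 : h * (um * um) = um * um * h := by
    rw [← mul_assoc, h_um, mul_assoc, sub_mul, h_um]
    simp only [mul_sub, mul_neg, neg_mul, mul_one, one_mul, mul_assoc]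
    abel
  unfold z0
  simp only [add_mul, mul_add, h1, mul_assoc]

lemma um_um : um * um = z0 - h * h - h := by unfold z0; abel
lemma up_up : up * up = z0 - h * h + h := by rw [upsq]; unfold z0; abel

lemma comm_aeval (x : R) (hx : z0 * x = x * z0) (q : ℂ[X]) : Commute (aeval z0 q) x := by
  induction q using Polynomial.induction_on' with
  | add p q hp hq => rw [map_add]; exact hp.add_left hq
  | monomial n a =>
    rw [aeval_monomial]
    exact (show Commute (algebraMap ℂ R a) x from Algebra.commutes a x).mul_left ((show Commute z0 x from hx).pow_left n)

noncomputable def io : D →+* R :=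
  eval₂RingHom' (aeval z0 : ℂ[X] →ₐ[ℂ] R).toRingHom h (fun q => comm_aeval h z0_h q)

lemma io_X : io X = h := by simp [io, eval₂RingHom']
lemma io_C (q : ℂ[X]) : io (C q) = aeval z0 q := by simp [io, eval₂RingHom']
lemma io_alg (c : ℂ) : io (algebraMap ℂ D c) = algebraMap ℂ R c := by
  rw [show algebraMap ℂ D c = C (C c) from rfl, io_C]; simp

noncomputable def sp : D →ₐ[ℂ] D := (aeval (1 - X) : D →ₐ[ℂ[X]] D).restrictScalars ℂ
noncomputable def sm : D →ₐ[ℂ] D := (aeval (-1 - X) : D →ₐ[ℂ[X]] D).restrictScalars ℂ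

lemma sp_X : sp X = 1 - X := by simp [sp]
lemma sm_X : sm X = -1 - X := by simp [sm]
lemma sp_C (q : ℂ[X]) : sp (C q) = C q := by simp [sp]
lemma sm_C (q : ℂ[X]) : sm (C q) = C q := by simp [sm]
lemma sp_eval (p : D) (a : ℂ[X]) : (sp p).eval a = p.eval (1 - a) := by
  have : sp p = p.comp (1 - X) := by simp [sp, Polynomial.comp, aeval_def]
  rw [this, Polynomial.eval_comp]; simp
lemma sm_eval (p : D) (a : ℂ[X]) : (sm p).eval a = p.eval (-1 - a) := by
  have : sm p = p.comp (-1 - X) := by simp [sm, Polynomial.comp, aeval_def]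
  rw [this, Polynomial.eval_comp]; simp
lemma sp_sp (p : D) : sp (sp p) = p := by
  induction p using Polynomial.induction_on' with
  | add p q hp hq => simp [hp, hq]
  | monomial n a => simp [← C_mul_X_pow_eq_monomial, sp_X, sp_C]
lemma sm_sm (p : D) : sm (sm p) = p := by
  induction p using Polynomial.induction_on' with
  | add p q hp hq => simp [hp, hq]
  | monomial n a => simp [← C_mul_X_pow_eq_monomial, sm_X, sm_C]

lemma io_up (p : D) : io p * up = up * io (sp p) := by
  induction p using Polynomial.induction_on' with
  | add p q hp hq => simp [hp, hq, add_mul, mul_add]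
  | monomial n a =>
    have key : ∀ n : ℕ, h ^ n * up = up * (1 - h) ^ n := by
      intro n
      exact (show SemiconjBy up (1 - h) h from h_up.symm).pow_right n |>.eq.symm
    simp only [← C_mul_X_pow_eq_monomial, map_mul, map_pow, sp_X, sp_C, io_X, io_C, map_sub,
      map_one]
    rw [mul_assoc, key, ← mul_assoc, (comm_aeval up z0_up a).eq, mul_assoc]
lemma io_um (p : D) : io p * um = um * io (sm p) := by
  induction p using Polynomial.induction_on' with
  | add p q hp hq => simp [hp, hq, add_mul, mul_add]
  | monomial n a =>
    have key : ∀ n : ℕ, h ^ n * um = um * (-1 - h) ^ n := by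
      intro n
      exact (show SemiconjBy um (-1 - h) h from h_um.symm).pow_right n |>.eq.symm
    simp only [← C_mul_X_pow_eq_monomial, map_mul, map_pow, sm_X, sm_C, io_X, io_C, map_sub,
      map_one, map_neg]
    rw [mul_assoc, key, ← mul_assoc, (comm_aeval um z0_um a).eq, mul_assoc]

/-- the squares of `up`, `um` -/
noncomputable def qp : D := C X - X * X + X
noncomputable def qm : D := C X - X * X - X
lemma io_qp : io qp = up * up := by rw [up_up]; simp [qp, io_X, io_C]
lemma io_qm : io qm = um * um := by rw [um_um]; simp [qm, io_X, io_C]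
lemma sp_qp : sp qp = qp := by simp [qp, sp_X, sp_C]; ring
lemma sm_qm : sm qm = qm := by simp [qm, sm_X, sm_C]; ring

noncomputable def cp (m : ℤ) : D := if m ≤ 0 then 1 else qp
noncomputable def cm (m : ℤ) : D := if 0 ≤ m then 1 else qm

lemma cp_cp (m : ℤ) : sp (cp m) * cp (1 - m) = qp := by
  unfold cp
  split_ifs <;> first | omega | simp [sp_qp]
lemma cm_cm (m : ℤ) : sm (cm m) * cm (-1 - m) = qm := by
  unfold cm
  split_ifs <;> first | omega | simp [sm_qm]

/-- right multiplications on the model -/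
noncomputable def rp : Module.End ℂ V := Finsupp.lsum ℂ (fun m : ℤ =>
  (Finsupp.lsingle (1 - m)) ∘ₗ (LinearMap.mulRight ℂ (cp m)) ∘ₗ sp.toLinearMap)
noncomputable def rm : Module.End ℂ V := Finsupp.lsum ℂ (fun m : ℤ =>
  (Finsupp.lsingle (-1 - m)) ∘ₗ (LinearMap.mulRight ℂ (cm m)) ∘ₗ sm.toLinearMap)
noncomputable def rh : Module.End ℂ V := Finsupp.lsum ℂ (fun m : ℤ =>
  (Finsupp.lsingle m) ∘ₗ (LinearMap.mulRight ℂ X))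

lemma rp_single (m : ℤ) (p : D) :
    rp (Finsupp.single m p) = Finsupp.single (1 - m) (sp p * cp m) := by simp [rp]
lemma rm_single (m : ℤ) (p : D) :
    rm (Finsupp.single m p) = Finsupp.single (-1 - m) (sm p * cm m) := by simp [rm]
lemma rh_single (m : ℤ) (p : D) :
    rh (Finsupp.single m p) = Finsupp.single m (p * X) := by simp [rh]

lemma rel1 : rp * rp = rm * rm + (2 : ℂ) • rh := by
  refine Finsupp.lhom_ext fun m p => ?_
  have h1 : sp (sp p * cp m) * cp (1 - m) = p * qp := by
    rw [map_mul, sp_sp, mul_assoc, cp_cp]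
  have h2 : sm (sm p * cm m) * cm (-1 - m) = p * qm := by
    rw [map_mul, sm_sm, mul_assoc, cm_cm]
  simp only [Module.End.mul_apply, LinearMap.add_apply, LinearMap.smul_apply, rp_single,
    rm_single, rh_single, h1, h2]
  simp only [sub_sub_cancel, Finsupp.smul_single, ← Finsupp.single_add]
  congr 1
  simp only [qp, qm, two_smul]
  ring
lemma rel2 : rp * rh + rh * rp = rp := by
  refine Finsupp.lhom_ext fun m p => ?_
  simp only [Module.End.mul_apply, LinearMap.add_apply, rp_single,
    rh_single, ← Finsupp.single_add, map_mul, sp_X]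
  congr 1
  ring
lemma rel3 : rm * rh + rh * rm = -rm := by
  refine Finsupp.lhom_ext fun m p => ?_
  simp only [Module.End.mul_apply, LinearMap.add_apply, LinearMap.neg_apply, rm_single,
    rh_single, ← Finsupp.single_add, ← Finsupp.single_neg, map_mul, sm_X]
  congr 1
  ring

section
variable {A : Type*} [Ring A] [Algebra ℂ A] (a b c : A)

lemma gen1 (h1 : a * a = b * b + (2 : ℂ) • c) :
    ((1/2 : ℂ) • (a - b)) * ((1/2 : ℂ) • (a + b)) + ((1/2 : ℂ) • (a + b)) * ((1/2 : ℂ) • (a - b))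
      = c := by
  have : (a - b) * (a + b) + (a + b) * (a - b) = (2 : ℂ) • (a * a - b * b) := by
    rw [two_smul]; noncomm_ring
  rw [smul_mul_smul_comm, smul_mul_smul_comm, ← smul_add, this, h1]
  module

lemma gen2 (h2 : a * c + c * a = a) (h3 : b * c + c * b = -b) :
    c * ((1/2 : ℂ) • (a + b)) + ((1/2 : ℂ) • (a + b)) * c = (1/2 : ℂ) • (a - b) := by
  have : c * (a + b) + (a + b) * c = (a * c + c * a) + (b * c + c * b) := by noncomm_ring
  rw [mul_smul_comm, smul_mul_assoc, ← smul_add, this, h2, h3, sub_eq_add_neg]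

lemma gen3 (h2 : a * c + c * a = a) (h3 : b * c + c * b = -b) :
    c * ((1/2 : ℂ) • (a - b)) + ((1/2 : ℂ) • (a - b)) * c = (1/2 : ℂ) • (a + b) := by
  have : c * (a - b) + (a - b) * c = (a * c + c * a) - (b * c + c * b) := by noncomm_ring
  rw [mul_smul_comm, smul_mul_assoc, ← smul_add, this, h2, h3, sub_neg_eq_add]
end

open MulOpposite in
noncomputable def E0 : FreeAlgebra ℂ (Fin 3) →ₐ[ℂ] (Module.End ℂ V)ᵐᵒᵖ :=
  FreeAlgebra.lift ℂ ![op ((1/2 : ℂ) • (rp + rm)), op ((1/2 : ℂ) • (rp - rm)), op rh]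

lemma E0_rel ⦃x y : FreeAlgebra ℂ (Fin 3)⦄ (hxy : CRel x y) : E0 x = E0 y := by
  apply MulOpposite.unop_injective
  cases hxy
  · simpa [E0] using gen1 rp rm rh rel1
  · simpa [E0] using gen2 rp rm rh rel2 rel3
  · simpa [E0] using gen3 rp rm rh rel2 rel3

noncomputable def E : R →ₐ[ℂ] (Module.End ℂ V)ᵐᵒᵖ := RingQuot.liftAlgHom ℂ ⟨E0, E0_rel⟩

lemma E_e (i : Fin 3) : E (e i) = E0 (ι ℂ i) := by simp [E, e]
lemma E_up : (E up).unop = rp := by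
  simp [up, E_e, E0]; module
lemma E_um : (E um).unop = rm := by
  simp [um, E_e, E0]; module
lemma E_h : (E h).unop = rh := by
  simp [h, E_e, E0]

noncomputable def phi (r : R) : V := (E r).unop (Finsupp.single 0 1)
lemma phi_mul (r s : R) : phi (r * s) = (E s).unop (phi r) := by simp [phi]

lemma phi_add (r s : R) : phi (r + s) = phi r + phi s := by simp [phi]

noncomputable def PN : ℕ → R × R
  | 0 => (1, 1)
  | n + 1 => ((PN n).2 * up, (PN n).1 * um)

noncomputable def v : ℤ → R
  | Int.ofNat n => (PN n).1
  | Int.negSucc n => (PN (n + 1)).2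

lemma v_nat (n : ℕ) : v (n : ℤ) = (PN n).1 := rfl
lemma v_neg (n : ℕ) : v (-(n : ℤ)) = (PN n).2 := by
  cases n with
  | zero => simp [v_nat 0, PN, show v 0 = (PN 0).1 from rfl]
  | succ n => rfl

lemma v_up_of_nonpos (m : ℤ) (hm : m ≤ 0) : v m * up = v (1 - m) := by
  obtain ⟨n, rfl⟩ : ∃ n : ℕ, m = -(n : ℤ) := ⟨(-m).toNat, by omega⟩
  rw [v_neg, show (1 - -(n : ℤ)) = ((n + 1 : ℕ) : ℤ) by push_cast; ring, v_nat]
  rfl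
lemma v_um_of_nonneg (m : ℤ) (hm : 0 ≤ m) : v m * um = v (-1 - m) := by
  obtain ⟨n, rfl⟩ : ∃ n : ℕ, m = (n : ℤ) := ⟨m.toNat, by omega⟩
  rw [v_nat, show (-1 - (n : ℤ)) = -((n + 1 : ℕ) : ℤ) by push_cast; ring, v_neg]
  rfl
lemma v_up (m : ℤ) : v m * up = v (1 - m) * io (cp m) := by
  by_cases hm : m ≤ 0
  · simp [v_up_of_nonpos m hm, cp, hm]
  · have := v_up_of_nonpos (1 - m) (by omega)
    rw [sub_sub_cancel] at this
    simp [← this, cp, hm, io_qp, mul_assoc]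
lemma v_um (m : ℤ) : v m * um = v (-1 - m) * io (cm m) := by
  by_cases hm : 0 ≤ m
  · simp [v_um_of_nonneg m hm, cm, hm]
  · have := v_um_of_nonneg (-1 - m) (by omega)
    rw [sub_sub_cancel] at this
    rw [cm, if_neg hm, io_qm, ← this, mul_assoc]

noncomputable def psi : V →+ R :=
  Finsupp.liftAddHom fun m => (AddMonoidHom.mulLeft (v m)).comp io.toAddMonoidHom

lemma psi_single (m : ℤ) (p : D) : psi (Finsupp.single m p) = v m * io p := by
  simp [psi]

lemma psi_smul (q : D) (x : V) : psi (q • x) = psi x * io q := by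
  induction x using Finsupp.induction_linear with
  | zero => simp
  | add f g hf hg => simp [hf, hg, add_mul]
  | single m p => rw [Finsupp.smul_single, psi_single, psi_single, smul_eq_mul, mul_comm, map_mul,
      mul_assoc]

lemma psi_csmul (c : ℂ) (x : V) : psi (c • x) = psi x * algebraMap ℂ R c := by
  rw [← io_alg, ← psi_smul, algebraMap_smul]

lemma psi_rp (x : V) : psi (rp x) = psi x * up := by
  induction x using Finsupp.induction_linear with
  | zero => simp
  | add f g hf hg => simp [hf, hg, add_mul]
  | single m p =>
    rw [rp_single, psi_single, psi_single, mul_assoc, io_up, ← mul_assoc, v_up, mul_comm (sp p),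
      map_mul, mul_assoc]
lemma psi_rm (x : V) : psi (rm x) = psi x * um := by
  induction x using Finsupp.induction_linear with
  | zero => simp
  | add f g hf hg => simp [hf, hg, add_mul]
  | single m p =>
    rw [rm_single, psi_single, psi_single, mul_assoc, io_um, ← mul_assoc, v_um, mul_comm (sm p),
      map_mul, mul_assoc]
lemma rh_eq (x : V) : rh x = (X : D) • x := by
  induction x using Finsupp.induction_linear with
  | zero => simp
  | add f g hf hg => simp [hf, hg]
  | single m p => rw [rh_single, Finsupp.smul_single, smul_eq_mul, mul_comm]
lemma psi_rh (x : V) : psi (rh x) = psi x * h := by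
  rw [rh_eq, psi_smul, io_X]

lemma R_ind {P : R → Prop} (hc : ∀ c : ℂ, P (algebraMap ℂ R c)) (he : ∀ i, P (e i))
    (ha : ∀ r s, P r → P s → P (r + s)) (hm : ∀ r s, P r → P s → P (r * s)) (r : R) : P r := by
  obtain ⟨f, rfl⟩ := RingQuot.mkAlgHom_surjective ℂ CRel r
  induction f using FreeAlgebra.induction with
  | grade0 c => simpa using hc c
  | grade1 i => exact he i
  | mul a b ha hb => rw [map_mul]; exact hm _ _ ha hb
  | add a b h1 h2 => rw [map_add]; exact ha _ _ h1 h2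

lemma e0_eq : e 0 = (1/2 : ℂ) • (up + um) := by unfold up um; module
lemma e1_eq : e 1 = (1/2 : ℂ) • (up - um) := by unfold up um; module

lemma psi_E (r : R) : ∀ x : V, psi ((E r).unop x) = psi x * r := by
  induction r using R_ind with
  | hc c => intro x; rw [← psi_csmul]; simp [Algebra.algebraMap_eq_smul_one]
  | he i =>
    intro x
    fin_cases i
    · simp only [Fin.zero_eta, Fin.mk_one, Fin.reduceFinMk, e0_eq, map_smul, map_add, map_sub, MulOpposite.unop_smul, MulOpposite.unop_add,
        E_up, E_um, LinearMap.smul_apply, LinearMap.add_apply, psi_csmul, psi_rp, psi_rm]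
      rw [← mul_add, mul_assoc, ← Algebra.commutes, Algebra.smul_def, ← mul_assoc, mul_assoc]
    · simp only [Fin.zero_eta, Fin.mk_one, Fin.reduceFinMk, e1_eq, map_smul, map_add, map_sub, MulOpposite.unop_smul, MulOpposite.unop_sub,
        E_up, E_um, LinearMap.smul_apply, LinearMap.sub_apply, psi_csmul, psi_rp, psi_rm]
      rw [← mul_sub, mul_assoc, ← Algebra.commutes, Algebra.smul_def, ← mul_assoc, mul_assoc]
    · change psi ((E h).unop x) = psi x * h
      rw [E_h, psi_rh]
  | ha r s hr hs => intro x; simp [hr, hs, mul_add]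
  | hm r s hr hs => intro x; simp [hr, hs, mul_assoc]

lemma psi_phi (r : R) : psi (phi r) = r := by
  rw [phi, psi_E, psi_single, map_one, mul_one]
  exact one_mul r

lemma psi_surj (r : R) : ∃ x, psi x = r := ⟨_, psi_phi r⟩

lemma phi_PN (n : ℕ) : phi (PN n).1 = Finsupp.single (n : ℤ) 1 ∧
    phi (PN n).2 = Finsupp.single (-(n : ℤ)) 1 := by
  induction n with
  | zero => simp [PN, phi]
  | succ n ih =>
    constructor
    · rw [PN, phi_mul, ih.2, E_up, rp_single, cp, if_pos (by omega)]
      simp [add_comm]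
    · rw [PN, phi_mul, ih.1, E_um, rm_single, cm, if_pos (by omega)]
      simp [sub_eq_add_neg, add_comm]

lemma phi_v (m : ℤ) : phi (v m) = Finsupp.single m 1 := by
  obtain ⟨n, rfl | rfl⟩ := m.eq_nat_or_neg
  · exact (phi_PN n).1
  · rw [v_neg]; exact (phi_PN n).2

lemma E_z0 (x : V) : (E z0).unop x = (C X : D) • x := by
  induction x using Finsupp.induction_linear with
  | zero => simp
  | add f g hf hg => rw [map_add, hf, hg, smul_add]
  | single m p =>
    have h2 : sm (sm p) * sm (cm m) * cm (-1 - m) = p * qm := by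
      rw [sm_sm, mul_assoc, cm_cm]
    simp only [z0, map_add, map_mul, MulOpposite.unop_add, MulOpposite.unop_mul, E_um, E_h,
      LinearMap.add_apply, Module.End.mul_apply, rm_single, rh_single, sub_sub_cancel,
      ← Finsupp.single_add, Finsupp.smul_single]
    congr 1
    rw [h2]
    simp only [qm, smul_eq_mul]
    ring

lemma E_io (p : D) : ∀ x : V, (E (io p)).unop x = p • x := by
  induction p using Polynomial.induction_on with
  | C q =>
    induction q using Polynomial.induction_on with
    | C c => intro x; rw [show (C (C c) : D) = algebraMap ℂ D c from rfl, io_alg, algebraMap_smul]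
             simp [Algebra.algebraMap_eq_smul_one]
    | add p q hp hq => intro x; simp [hp, hq, add_smul]
    | monomial n c ih =>
      intro x
      have : io (C X) = z0 := by simp [io_C]
      rw [pow_succ, ← mul_assoc, map_mul, map_mul, map_mul, MulOpposite.unop_mul,
        Module.End.mul_apply, ih, this, E_z0, smul_smul, mul_comm]
  | add p q hp hq => intro x; simp [hp, hq, add_smul]
  | monomial n c ih =>
    intro x
    rw [pow_succ, ← mul_assoc, map_mul, map_mul, MulOpposite.unop_mul,
        Module.End.mul_apply, ih, io_X, E_h, rh_eq, smul_smul, mul_comm]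

lemma phi_psi (x : V) : phi (psi x) = x := by
  induction x using Finsupp.induction_linear with
  | zero => simp [phi]
  | add f g hf hg => rw [map_add, phi_add, hf, hg]
  | single m p => rw [psi_single, phi_mul, phi_v, E_io, Finsupp.smul_single, smul_eq_mul, mul_one]

lemma psi_inj {x y : V} (hxy : psi x = psi y) : x = y := by
  rw [← phi_psi x, hxy, phi_psi]

lemma rp_apply (x : V) (k : ℤ) : rp x k = sp (x (1 - k)) * cp (1 - k) := by
  induction x using Finsupp.induction_linear with
  | zero => simp
  | add f g hf hg => simp [hf, hg, add_mul]
  | single m p =>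
    rw [rp_single]
    by_cases hm : m = 1 - k
    · subst hm; simp
    · rw [Finsupp.single_eq_of_ne (by omega), Finsupp.single_eq_of_ne (by omega)]; simp
lemma rm_apply (x : V) (k : ℤ) : rm x k = sm (x (-1 - k)) * cm (-1 - k) := by
  induction x using Finsupp.induction_linear with
  | zero => simp
  | add f g hf hg => simp [hf, hg, add_mul]
  | single m p =>
    rw [rm_single]
    by_cases hm : m = -1 - k
    · subst hm; simp
    · rw [Finsupp.single_eq_of_ne (by omega), Finsupp.single_eq_of_ne (by omega)]; simp

lemma exists_div (x : V) (a : ℂ[X]) (hx : ∀ m, (x m).eval a = 0) : ∃ y : V, x = (X - C a : D) • y := by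
  refine ⟨x.mapRange (fun p => p /ₘ (X - C a)) (zero_divByMonic _), ?_⟩
  ext1 m
  rw [Finsupp.smul_apply, Finsupp.mapRange_apply, smul_eq_mul, eq_comm,
    mul_divByMonic_eq_iff_isRoot]
  exact hx m

lemma io_sub (c : ℂ) : io (X - C (C c)) = h - algebraMap ℂ R c := by
  rw [map_sub, io_X, io_C, aeval_C]

lemma reg (a : R) (c : ℂ) (ha : a * (h - algebraMap ℂ R c) = 0) : a = 0 := by
  obtain ⟨x, rfl⟩ := psi_surj a
  rw [← io_sub, ← psi_smul, ← map_zero psi] at ha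
  have := psi_inj ha
  have hx : x = 0 := by
    ext1 m
    have h1 := DFunLike.congr_fun this m
    rw [Finsupp.smul_apply, smul_eq_mul] at h1
    rcases mul_eq_zero.1 h1 with h2 | h2
    · exact absurd h2 (X_sub_C_ne_zero _)
    · exact h2
  rw [hx, map_zero]

lemma reg0 (a : R) (ha : a * h = 0) : a = 0 := reg a 0 (by simpa using ha)
lemma reg1 (a : R) (ha : a * (h - 1) = 0) : a = 0 := reg a 1 (by simpa using ha)
lemma regm (a : R) (ha : a * (h + 1) = 0) : a = 0 := reg a (-1) (by simpa using ha)

lemma fact2 (t s : R) (hts : t * up = s * (h - 1)) : ∃ t', t = t' * h := by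
  obtain ⟨x, rfl⟩ := psi_surj t
  obtain ⟨y, rfl⟩ := psi_surj s
  have hh : h - 1 = io (X - C (C 1)) := by rw [io_sub, map_one]
  rw [hh, ← psi_rp, ← psi_smul] at hts
  have h1 := psi_inj hts
  have h0 : ∀ m, (x m).eval 0 = 0 := by
    intro m
    have h2 := congrArg (Polynomial.eval (1 : ℂ[X])) (DFunLike.congr_fun h1 (1 - m))
    rw [rp_apply, Finsupp.smul_apply, smul_eq_mul, sub_sub_cancel, eval_mul, eval_mul,
      sp_eval] at h2
    simp only [sub_self, map_one, eval_sub, eval_X, eval_one, zero_mul] at h2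
    rcases mul_eq_zero.1 h2 with h3 | h3
    · exact h3
    · exfalso
      unfold cp at h3
      split_ifs at h3
      · simp at h3
      · simp [qp] at h3
  obtain ⟨y, rfl⟩ := exists_div x 0 h0
  refine ⟨psi y, ?_⟩
  rw [psi_smul]; simp [io_X]

lemma fact3 (a b w : R) (hab : a * up + b * um = w * h) :
    ∃ t a' b', a = t * up + a' * (h - 1) ∧ b = -(t * um) + b' * (h + 1) := by
  obtain ⟨x, rfl⟩ := psi_surj a
  obtain ⟨y, rfl⟩ := psi_surj b
  obtain ⟨w, rfl⟩ := psi_surj w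
  rw [← psi_rp, ← psi_rm, ← psi_rh, ← map_add] at hab
  have h1 := psi_inj hab
  have key : ∀ k, (x (1 - k)).eval 1 * (if 1 ≤ k then 1 else X) +
      (y (-1 - k)).eval (-1) * (if k ≤ -1 then 1 else X) = 0 := by
    intro k
    have h2 := congrArg (Polynomial.eval (0 : ℂ[X])) (DFunLike.congr_fun h1 k)
    rw [Finsupp.add_apply, rp_apply, rm_apply, rh_eq, Finsupp.smul_apply, smul_eq_mul, eval_add,
      eval_mul, eval_mul, eval_mul, sp_eval, sm_eval, eval_X, zero_mul, sub_zero, sub_zero] at h2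
    have e1 : (cp (1 - k)).eval (0 : ℂ[X]) = if 1 ≤ k then 1 else X := by
      unfold cp
      split_ifs <;> first | omega | simp [qp]
    have e2 : (cm (-1 - k)).eval (0 : ℂ[X]) = if k ≤ -1 then 1 else X := by
      unfold cm
      split_ifs <;> first | omega | simp [qm]
    rw [e1, e2] at h2
    exact h2
  let f : ℤ → D := fun m => if m ≤ 0 then C ((x (1 - m)).eval 1) else - C ((y (-1 - m)).eval (-1))
  let t : V := Finsupp.onFinset (x.support.image (1 - ·) ∪ y.support.image (-1 - ·)) f (by
    intro m hm
    by_contra hcon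
    simp only [Finset.mem_union, Finset.mem_image, Finsupp.mem_support_iff, not_or, not_exists,
      not_and] at hcon
    apply hm
    have hx : x (1 - m) = 0 := by
      by_contra h3
      exact hcon.1 _ h3 (by ring)
    have hy : y (-1 - m) = 0 := by
      by_contra h3
      exact hcon.2 _ h3 (by ring)
    simp [f, hx, hy])
  have ht : ∀ m, t m = f m := fun m => rfl
  have hx0 : ∀ k, ((x - rp t) k).eval 1 = 0 := by
    intro k
    have hk := key (1 - k)
    rw [sub_sub_cancel] at hk
    rw [Finsupp.sub_apply, rp_apply, eval_sub, eval_mul, sp_eval, sub_self, ht]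
    simp only [f, cp]
    by_cases hk1 : 1 - k ≤ 0
    · simp [hk1]
    · rw [if_pos (by omega), if_neg (by omega)] at hk
      rw [if_neg hk1, if_neg hk1]
      simp only [qp, eval_neg, eval_C, eval_add, eval_sub, eval_mul, eval_X]
      linear_combination hk
  have hy0 : ∀ k, ((y + rm t) k).eval (-1) = 0 := by
    intro k
    have hk := key (-1 - k)
    rw [sub_sub_cancel] at hk
    rw [Finsupp.add_apply, rm_apply, eval_add, eval_mul, sm_eval, sub_self, ht]
    simp only [f, cm]
    rcases lt_trichotomy (-1 - k) 0 with h0 | h0 | h0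
    · rw [if_neg (by omega), if_pos (by omega)] at hk
      rw [if_pos h0.le, if_neg (by omega)]
      simp only [qm, eval_C, eval_sub, eval_mul, eval_X]
      linear_combination hk
    · rw [if_neg (by omega), if_neg (by omega), ← add_mul] at hk
      have hk' := (mul_eq_zero.1 hk).resolve_right X_ne_zero
      rw [if_pos h0.le, if_pos h0.ge]
      simp only [eval_C, eval_one]
      linear_combination hk'
    · rw [if_neg (by omega), if_pos h0.le]
      simp
  obtain ⟨a', ha'⟩ := exists_div _ _ hx0
  obtain ⟨b', hb'⟩ := exists_div _ _ hy0
  refine ⟨psi t, psi a', psi b', ?_, ?_⟩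
  · rw [show h - 1 = io (X - C 1) by simp [io_X], ← psi_smul, ← ha', ← psi_rp, ← map_add]
    congr 1; abel
  · rw [show h + 1 = io (X - C (-1)) by simp [io_X], ← psi_smul, ← hb', ← psi_rm, map_add]
    abel

/-- the differentials -/
noncomputable def d1 : R × R × R →ₗ[R] R where
  toFun x := x.1 * up + x.2.1 * um + x.2.2 * h
  map_add' x y := by simp only [Prod.fst_add, Prod.snd_add, add_mul]; abel
  map_smul' r x := by simp [mul_add, mul_assoc]

noncomputable def d2 : R × R × R →ₗ[R] R × R × R where
  toFun x := (x.1 * up + x.2.1 * (h - 1), -(x.1 * um) + x.2.2 * (h + 1),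
    -(x.1 + x.1) + x.2.1 * up + x.2.2 * um)
  map_add' x y := by
    simp only [Prod.fst_add, Prod.snd_add, add_mul, Prod.mk_add_mk]
    refine Prod.ext ?_ (Prod.ext ?_ ?_) <;> (simp only; abel)
  map_smul' r x := by simp [mul_add, mul_assoc]

noncomputable def d3 : R →ₗ[R] R × R × R where
  toFun x := (x * h, x * up, -(x * um))
  map_add' x y := by
    simp only [add_mul, Prod.mk_add_mk]
    refine Prod.ext ?_ (Prod.ext ?_ ?_) <;> (simp only; try abel)
  map_smul' r x := by simp [mul_assoc]

lemma d1_apply (x) : d1 x = x.1 * up + x.2.1 * um + x.2.2 * h := rfl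
lemma d2_apply (x) : d2 x = (x.1 * up + x.2.1 * (h - 1), -(x.1 * um) + x.2.2 * (h + 1),
    -(x.1 + x.1) + x.2.1 * up + x.2.2 * um) := rfl
lemma d3_apply (x) : d3 x = (x * h, x * up, -(x * um)) := rfl

lemma d1_d2 (x) : d1 (d2 x) = 0 := by
  obtain ⟨t, a, b⟩ := x
  simp only [d1_apply, d2_apply]
  have h1 := upsq
  have h2 : (h - 1) * up + up * h = 0 := by
    rw [sub_mul, h_up, mul_sub, one_mul, mul_one]; abel
  have h3 : (h + 1) * um + um * h = 0 := by
    rw [add_mul, h_um, mul_sub, one_mul, mul_neg_one]; abel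
  calc _ = t * (up * up - (um * um + h + h)) + a * ((h - 1) * up + up * h)
        + b * ((h + 1) * um + um * h) := by
        simp only [mul_add, mul_sub, add_mul, sub_mul, neg_mul, mul_one, one_mul, mul_neg, mul_assoc]; abel
    _ = 0 := by rw [h1, h2, h3]; simp

lemma d2_d3 (x) : d2 (d3 x) = 0 := by
  simp only [d2_apply, d3_apply]
  refine Prod.ext ?_ (Prod.ext ?_ ?_)
  · simp only [mul_assoc, h_up, Prod.fst_zero]
    rw [← mul_add, ← mul_add]; simp
  · simp only [mul_assoc, h_um, Prod.fst_zero, Prod.snd_zero, neg_mul]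
    rw [← neg_add, ← mul_add, ← mul_add, show (-1 - h + (h + 1)) = 0 by abel]; simp
  · simp only [mul_assoc, Prod.snd_zero, neg_mul, upsq, mul_add]
    abel

lemma d3_inj (x) (hx : d3 x = 0) : x = 0 := reg0 x (congrArg Prod.fst hx)

lemma ex1 (x) (hx : d1 x = 0) : ∃ y, d2 y = x := by
  obtain ⟨a, b, c⟩ := x
  have h1 : a * up + b * um = (-c) * h := by
    rw [neg_mul, eq_neg_iff_add_eq_zero]; exact hx
  obtain ⟨t, a', b', ha, hb⟩ := fact3 _ _ _ h1
  have h2 := d1_d2 (t, a', b')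
  rw [d2_apply, d1_apply] at h2
  dsimp only at h2
  rw [← ha, ← hb] at h2
  rw [d1_apply] at hx
  dsimp only at hx
  refine ⟨(t, a', b'), ?_⟩
  rw [d2_apply]
  dsimp only
  rw [← ha, ← hb]
  congr 2
  have h3 := reg0 (-(t + t) + a' * up + b' * um - c) (by
    rw [sub_mul, sub_eq_zero]
    exact add_left_cancel (h2.trans hx.symm))
  exact sub_eq_zero.1 h3

lemma ex2 (x) (hx : d2 x = 0) : ∃ y, d3 y = x := by
  obtain ⟨t, a, b⟩ := x
  have h1 : t * up = (-a) * (h - 1) := by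
    rw [neg_mul, eq_neg_iff_add_eq_zero]; exact congrArg Prod.fst hx
  obtain ⟨s, rfl⟩ := fact2 _ _ h1
  refine ⟨s, ?_⟩
  have h2 : d2 (d3 s - (s * h, a, b)) = 0 := by rw [map_sub, d2_d3, hx, sub_zero]
  have h3 : d3 s - (s * h, a, b) = (0, s * up - a, -(s * um) - b) := by
    simp [d3_apply]
  rw [h3, d2_apply] at h2
  have h4 := reg1 _ (by simpa using congrArg Prod.fst h2)
  have h5 := regm _ (by simpa using congrArg (fun x => x.2.1) h2)
  rw [d3_apply, sub_eq_zero.1 h4, sub_eq_zero.1 h5]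

lemma ex0 (ε : R →ₐ[ℂ] ℂ) (hε : ∀ i : Fin 3, ε (e i) = 0) (r : R) : ∃ x, d1 x = r - algebraMap ℂ R (ε r) := by
  induction r using R_ind with
  | hc c => exact ⟨0, by simp⟩
  | he i =>
    rw [hε i]
    fin_cases i
    · refine ⟨(algebraMap ℂ R (1/2), algebraMap ℂ R (1/2), 0), ?_⟩
      simp only [d1_apply, zero_mul, ← mul_add, ← Algebra.smul_def, map_zero, sub_zero, add_zero]
      rw [← smul_add]; exact e0_eq.symm
    · refine ⟨(algebraMap ℂ R (1/2), -algebraMap ℂ R (1/2), 0), ?_⟩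
      simp only [d1_apply, zero_mul, neg_mul, ← sub_eq_add_neg, ← mul_sub, ← Algebra.smul_def,
        map_zero, sub_zero, add_zero]
      rw [← smul_sub]; exact e1_eq.symm
    · exact ⟨(0, 0, 1), by simp [d1_apply, h]⟩
  | ha r s hr hs =>
    obtain ⟨x, hx⟩ := hr
    obtain ⟨y, hy⟩ := hs
    exact ⟨x + y, by rw [map_add, hx, hy, map_add, map_add]; abel⟩
  | hm r s hr hs =>
    obtain ⟨x, hx⟩ := hr
    obtain ⟨y, hy⟩ := hs
    refine ⟨r • y + (algebraMap ℂ R (ε s)) • x, ?_⟩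
    rw [map_add, map_smul, map_smul, hx, hy, map_mul, map_mul, smul_eq_mul, smul_eq_mul, mul_sub,
      mul_sub, ← Algebra.commutes (ε s) r, (Algebra.commutes (ε s) (algebraMap ℂ R (ε r)))]
    abel

lemma eps_up (ε : R →ₐ[ℂ] ℂ) (hε : ∀ i : Fin 3, ε (e i) = 0) : ε up = 0 := by simp [up, hε]
lemma eps_um (ε : R →ₐ[ℂ] ℂ) (hε : ∀ i : Fin 3, ε (e i) = 0) : ε um = 0 := by simp [um, hε]
lemma eps_h (ε : R →ₐ[ℂ] ℂ) (hε : ∀ i : Fin 3, ε (e i) = 0) : ε h = 0 := by simp [h, hε]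

noncomputable def Cmod (ε : R →ₐ[ℂ] ℂ) : ModuleCat R :=
  letI : Module R ℂ := Module.compHom ℂ ε.toRingHom
  ModuleCat.of R ℂ

/-- an augmentation-semilinear map out of an `R`-module -/
noncomputable def toC (ε : R →ₐ[ℂ] ℂ) {M : Type} [AddCommGroup M] [Module R M] (f : M → ℂ)
    (ha : ∀ x y, f (x + y) = f x + f y) (hm : ∀ (r : R) x, f (r • x) = ε r * f x) :
    ModuleCat.of R M ⟶ Cmod ε :=
  letI : Module R ℂ := Module.compHom ℂ ε.toRingHom
  ModuleCat.ofHom (Y := ℂ) { toFun := f, map_add' := ha, map_smul' := hm }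

/-- underlying function of a map to `Cmod` -/
noncomputable def fn {ε : R →ₐ[ℂ] ℂ} {M : ModuleCat R} (f : M ⟶ Cmod ε) (x : M) : ℂ := f.hom x

lemma fn_toC (ε : R →ₐ[ℂ] ℂ) {M : Type} [AddCommGroup M] [Module R M] (f : M → ℂ)
    (ha : ∀ x y, f (x + y) = f x + f y) (hm : ∀ (r : R) x, f (r • x) = ε r * f x) (x : M) :
    fn (toC ε f ha hm) x = f x := rfl

section
variable {ε : R →ₐ[ℂ] ℂ} {M : ModuleCat R}
lemma fn_add (f : M ⟶ Cmod ε) (x y : M) : fn f (x + y) = fn f x + fn f y := f.hom.map_add x y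
lemma fn_smul (f : M ⟶ Cmod ε) (r : R) (x : M) : fn f (r • x) = ε r * fn f x := f.hom.map_smul r x
lemma fn_zero (x : M) : fn (0 : M ⟶ Cmod ε) x = 0 := rfl
lemma fn_csmul (f : M ⟶ Cmod ε) (c : ℂ) (x : M) : fn (c • f) x = c * fn f x := by
  have : fn (c • f) x = ε (algebraMap ℂ R c) * fn f x := rfl
  rw [this, AlgHom.commutes]; rfl
lemma fn_comp {N : ModuleCat R} (g : N ⟶ M) (f : M ⟶ Cmod ε) (x : N) :
    fn (g ≫ f) x = fn f (g.hom x) := rfl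
lemma fn_ext {f g : M ⟶ Cmod ε} (hfg : ∀ x, fn f x = fn g x) : f = g := by
  ext x; exact hfg x
end

noncomputable def CX : ℕ → ModuleCat.{0} R
  | 0 => ModuleCat.of R R
  | 1 => ModuleCat.of R (R × R × R)
  | 2 => ModuleCat.of R (R × R × R)
  | 3 => ModuleCat.of R R
  | _ + 4 => ModuleCat.of R PUnit

noncomputable def Cd : ∀ n, CX (n + 1) ⟶ CX n
  | 0 => ModuleCat.ofHom d1
  | 1 => ModuleCat.ofHom d2
  | 2 => ModuleCat.ofHom d3
  | _ + 3 => 0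

lemma Cd_sq : ∀ n, Cd (n + 1) ≫ Cd n = 0
  | 0 => ModuleCat.hom_ext (LinearMap.ext d1_d2)
  | 1 => ModuleCat.hom_ext (LinearMap.ext d2_d3)
  | 2 => Limits.zero_comp
  | _ + 3 => Limits.zero_comp

noncomputable def K : ChainComplex (ModuleCat.{0} R) ℕ := ChainComplex.of CX Cd Cd_sq

lemma K_d (n : ℕ) : K.d (n + 1) n = Cd n := ChainComplex.of_d _ _ _

noncomputable def aug (ε : R →ₐ[ℂ] ℂ) : K.X 0 ⟶ Cmod ε :=
  toC ε (M := R) (fun r => ε r) (fun x y => map_add ε x y) (fun r x => map_mul ε r x)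

lemma aug_d1 (ε : R →ₐ[ℂ] ℂ) (hε : ∀ i : Fin 3, ε (e i) = 0) (x) : ε (d1 x) = 0 := by
  simp [d1_apply, eps_up ε hε, eps_um ε hε, eps_h ε hε]

lemma d1_aug (ε : R →ₐ[ℂ] ℂ) (hε : ∀ i : Fin 3, ε (e i) = 0) : K.d 1 0 ≫ aug ε = 0 := by
  rw [K_d]
  apply fn_ext
  intro x
  exact aug_d1 ε hε x

lemma K_proj : ∀ n, Projective (K.X n)
  | 0 => inferInstanceAs (Projective (ModuleCat.of R R))
  | 1 => inferInstanceAs (Projective (ModuleCat.of R (R × R × R)))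
  | 2 => inferInstanceAs (Projective (ModuleCat.of R (R × R × R)))
  | 3 => inferInstanceAs (Projective (ModuleCat.of R R))
  | _ + 4 => inferInstanceAs (Projective (ModuleCat.of R PUnit))

lemma exact_of {A B C : ModuleCat.{0} R} (f : A ⟶ B) (g : B ⟶ C) (w : f ≫ g = 0)
    (hfg : ∀ x, g.hom x = 0 → ∃ y, f.hom y = x) : (ShortComplex.mk f g w).Exact := by
  rw [ShortComplex.moduleCat_exact_iff]
  exact hfg

lemma Cd_exact : ∀ n, ∀ x, (Cd n).hom x = 0 → ∃ y, (Cd (n + 1)).hom y = x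
  | 0 => ex1
  | 1 => ex2
  | 2 => fun x hx => ⟨0, (d3_inj x hx).symm⟩
  | _ + 3 => fun _ _ => ⟨0, rfl⟩

lemma K_exact (n : ℕ) : K.ExactAt (n + 1) := by
  rw [HomologicalComplex.exactAt_iff' _ (n + 2) (n + 1) n (by simp only [ChainComplex.prev]; rfl)
    (by simp)]
  refine exact_of (K.d (n + 2) (n + 1)) (K.d (n + 1) n) (K.d_comp_d _ _ _) ?_
  rw [K_d, K_d]
  exact Cd_exact n

lemma ex0' (ε : R →ₐ[ℂ] ℂ) (hε : ∀ i : Fin 3, ε (e i) = 0) (r : R) (hr : ε r = 0) :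
    ∃ x, d1 x = r := by
  obtain ⟨y, hy⟩ := ex0 ε hε r
  rw [hr, map_zero, sub_zero] at hy
  exact ⟨y, hy⟩

lemma K_aug_exact (ε : R →ₐ[ℂ] ℂ) (hε : ∀ i : Fin 3, ε (e i) = 0) :
    (ShortComplex.mk (K.d 1 0) (aug ε) (d1_aug ε hε)).Exact := by
  apply exact_of
  rw [K_d]
  intro x hx
  exact ex0' ε hε x hx

lemma aug_epi (ε : R →ₐ[ℂ] ℂ) : Epi (aug ε) := by
  rw [ModuleCat.epi_iff_surjective]
  intro c
  exact ⟨algebraMap ℂ R c, ε.commutes c⟩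

noncomputable def P (ε : R →ₐ[ℂ] ℂ) (hε : ∀ i : Fin 3, ε (e i) = 0) :
    ProjectiveResolution (Cmod ε) where
  complex := K
  projective := K_proj
  π := (ChainComplex.toSingle₀Equiv _ _).symm ⟨aug ε, d1_aug ε hε⟩
  quasiIso := ⟨fun n => by
    cases n with
    | zero =>
      rw [ChainComplex.quasiIsoAt₀_iff, ShortComplex.quasiIso_iff_of_zeros']
      · refine (ShortComplex.exact_and_epi_g_iff_of_iso ?_).2
          ⟨K_aug_exact ε hε, aug_epi ε⟩
        exact ShortComplex.isoMk (Iso.refl _) (Iso.refl _) (Iso.refl _)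
          (by simp; exact (Category.id_comp _).trans (Category.comp_id _).symm)
          (by simp; exact (Category.id_comp _).trans (Category.comp_id _).symm)
      all_goals rfl
    | succ n =>
      rw [quasiIsoAt_iff_exactAt']
      · exact K_exact n
      · exact ChainComplex.exactAt_succ_single_obj _ _⟩

noncomputable abbrev LC (ε : R →ₐ[ℂ] ℂ) : CochainComplex (ModuleCat.{0} ℂ) ℕ :=
  K.linearYonedaObj ℂ (Cmod ε)

lemma LC_d (ε : R →ₐ[ℂ] ℂ) (n : ℕ) (f : CX n ⟶ Cmod ε) :
    ((LC ε).d n (n + 1)).hom f = Cd n ≫ f := by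
  rw [← K_d]
  rfl

lemma extDim_eq (ε : R →ₐ[ℂ] ℂ) (hε : ∀ i : Fin 3, ε (e i) = 0) (n : ℕ) :
    extDim R ε n = Module.finrank ℂ ((LC ε).homology n) :=
  ((P ε hε).isoExt (R := ℂ) n (Cmod ε)).toLinearEquiv.finrank_eq

lemma extDim_zero (ε : R →ₐ[ℂ] ℂ) (hε : ∀ i : Fin 3, ε (e i) = 0) (n : ℕ)
    (hf : ∀ f : CX (n + 1) ⟶ Cmod ε, Cd (n + 1) ≫ f = 0 → ∃ g, Cd n ≫ g = f) :
    extDim R ε (n + 1) = 0 := by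
  rw [extDim_eq ε hε]
  have : (LC ε).ExactAt (n + 1) := by
    rw [HomologicalComplex.exactAt_iff' _ n (n + 1) (n + 2) (by simp)
      (by simp only [CochainComplex.next]; rfl), ShortComplex.moduleCat_exact_iff]
    intro f h0
    obtain ⟨g, hg⟩ := hf f ((LC_d ε (n + 1) f).symm.trans h0)
    exact ⟨g, (LC_d ε n g).trans hg⟩
  rw [HomologicalComplex.exactAt_iff_isZero_homology] at this
  have := ModuleCat.subsingleton_of_isZero this
  exact Module.finrank_zero_of_subsingleton

lemma fn_congr {ε : R →ₐ[ℂ] ℂ} {M : ModuleCat R} {f g : M ⟶ Cmod ε} (hfg : f = g) (x : M) :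
    fn f x = fn g x := by rw [hfg]

lemma homR (ε : R →ₐ[ℂ] ℂ) : Module.finrank ℂ (ModuleCat.of R R ⟶ Cmod ε) = 1 := by
  refine finrank_eq_one (toC ε (fun r => ε r) (fun x y => map_add ε x y)
    (fun r x => map_mul ε r x)) ?_ ?_
  · intro h0
    have h1 : ε (1 : R) = 0 := fn_congr h0 (1 : R)
    rw [map_one] at h1
    exact one_ne_zero h1
  · intro f
    refine ⟨fn f (1 : R), fn_ext fun x => ?_⟩
    rw [fn_csmul, fn_toC, mul_comm, ← fn_smul]
    exact congrArg _ (mul_one x)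

lemma extDim_one (ε : R →ₐ[ℂ] ℂ) (hε : ∀ i : Fin 3, ε (e i) = 0) (n : ℕ)
    (hf : ((LC ε).sc n).f = 0) (hg : ((LC ε).sc n).g = 0) :
    extDim R ε n = Module.finrank ℂ (CX n ⟶ Cmod ε) := by
  rw [extDim_eq ε hε]
  exact ((ShortComplex.HomologyData.ofZeros _ hf hg).left.homologyIso).toLinearEquiv.finrank_eq

lemma fn_one {ε : R →ₐ[ℂ] ℂ} (f : ModuleCat.of R R ⟶ Cmod ε) (r : R) :
    fn f r = ε r * fn f (1 : R) := by
  have h1 := fn_smul f r (1 : R)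
  rw [← h1]
  exact congrArg (fn f) (mul_one r).symm

lemma Cd0' (ε : R →ₐ[ℂ] ℂ) (hε : ∀ i : Fin 3, ε (e i) = 0) (f : ModuleCat.of R R ⟶ Cmod ε)
    (x : R × R × R) : fn f (d1 x) = 0 := by
  rw [fn_one f (d1 x), aug_d1 ε hε, zero_mul]

lemma Cd0_comp (ε : R →ₐ[ℂ] ℂ) (hε : ∀ i : Fin 3, ε (e i) = 0) (f : CX 0 ⟶ Cmod ε) :
    Cd 0 ≫ f = 0 :=
  fn_ext fun x => Cd0' ε hε f x

lemma fn_prod {ε : R →ₐ[ℂ] ℂ} (f : ModuleCat.of R (R × R × R) ⟶ Cmod ε) (a b c : R) :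
    fn f (a, b, c) = ε a * fn f ((1, 0, 0) : R × R × R) + ε b * fn f ((0, 1, 0) : R × R × R)
      + ε c * fn f ((0, 0, 1) : R × R × R) := by
  rw [← fn_smul, ← fn_smul, ← fn_smul, ← fn_add, ← fn_add]
  congr 1
  change (a, b, c) = a • ((1, 0, 0) : R × R × R) + b • ((0, 1, 0) : R × R × R)
    + c • ((0, 0, 1) : R × R × R)
  simp

lemma fn_d2 (ε : R →ₐ[ℂ] ℂ) (hε : ∀ i : Fin 3, ε (e i) = 0)
    (f : ModuleCat.of R (R × R × R) ⟶ Cmod ε) (a b c : R) :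
    fn f (d2 (a, b, c)) = - ε b * fn f ((1, 0, 0) : R × R × R)
      + ε c * fn f ((0, 1, 0) : R × R × R) - 2 * ε a * fn f ((0, 0, 1) : R × R × R) := by
  rw [d2_apply, fn_prod]
  simp only [map_add, map_mul, map_sub, map_neg, map_one, eps_up ε hε, eps_um ε hε, eps_h ε hε]
  ring

lemma Cd2' (ε : R →ₐ[ℂ] ℂ) (hε : ∀ i : Fin 3, ε (e i) = 0)
    (f : ModuleCat.of R (R × R × R) ⟶ Cmod ε) (x : R) : fn f (d3 x) = 0 := by
  rw [d3_apply]
  refine (fn_prod f _ _ _).trans ?_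
  simp only [map_mul, map_neg, eps_up ε hε, eps_um ε hε, eps_h ε hε]
  ring

lemma Cd2_comp (ε : R →ₐ[ℂ] ℂ) (hε : ∀ i : Fin 3, ε (e i) = 0) (f : CX 2 ⟶ Cmod ε) :
    Cd 2 ≫ f = 0 :=
  fn_ext fun x => Cd2' ε hε f x

lemma Cd1_inj' (ε : R →ₐ[ℂ] ℂ) (hε : ∀ i : Fin 3, ε (e i) = 0)
    (f : ModuleCat.of R (R × R × R) ⟶ Cmod ε)
    (hf : ∀ x : R × R × R, fn f (d2 x) = 0) : f = 0 := by
  have key : ∀ a b c : R, - ε b * fn f ((1, 0, 0) : R × R × R)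
      + ε c * fn f ((0, 1, 0) : R × R × R) - 2 * ε a * fn f ((0, 0, 1) : R × R × R) = 0 := by
    intro a b c
    exact (fn_d2 ε hε f a b c).symm.trans (hf (a, b, c))
  have k1 := key 0 1 0
  have k2 := key 0 0 1
  have k3 := key 1 0 0
  simp only [map_zero, map_one, neg_zero, zero_mul, mul_zero, one_mul, mul_one, sub_zero, zero_sub,
    add_zero, zero_add, neg_mul, neg_eq_zero, mul_eq_zero, false_or,
    OfNat.ofNat_ne_zero] at k1 k2 k3
  refine fn_ext fun x => ?_
  obtain ⟨a, b, c⟩ : R × R × R := x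
  refine (fn_prod f a b c).trans (Eq.trans ?_ (fn_zero _).symm)
  rw [k1, k2, k3]
  ring

lemma Cd1_inj (ε : R →ₐ[ℂ] ℂ) (hε : ∀ i : Fin 3, ε (e i) = 0) (f : CX 1 ⟶ Cmod ε)
    (hf : Cd 1 ≫ f = 0) : f = 0 :=
  Cd1_inj' ε hε f fun x => fn_congr hf x

lemma Cd1_surj' (ε : R →ₐ[ℂ] ℂ) (hε : ∀ i : Fin 3, ε (e i) = 0)
    (g : ModuleCat.of R (R × R × R) ⟶ Cmod ε) :
    ∃ f : ModuleCat.of R (R × R × R) ⟶ Cmod ε, ∀ x : R × R × R, fn f (d2 x) = fn g x := by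
  let f : ModuleCat.of R (R × R × R) ⟶ Cmod ε := toC ε
    (fun x : R × R × R => - ε x.1 * fn g ((0, 1, 0) : R × R × R)
      + ε x.2.1 * fn g ((0, 0, 1) : R × R × R) - ε x.2.2 / 2 * fn g ((1, 0, 0) : R × R × R))
    (fun x y => by simp only [Prod.fst_add, Prod.snd_add, map_add]; ring)
    (fun r x => by simp only [Prod.smul_fst, Prod.smul_snd, smul_eq_mul, map_mul]; ring)
  refine ⟨f, fun x => ?_⟩
  obtain ⟨a, b, c⟩ : R × R × R := x
  refine (fn_d2 ε hε f a b c).trans (Eq.trans ?_ (fn_prod g a b c).symm)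
  simp only [f, fn_toC, map_one, map_zero]
  ring

lemma Cd1_surj (ε : R →ₐ[ℂ] ℂ) (hε : ∀ i : Fin 3, ε (e i) = 0) (g : CX 2 ⟶ Cmod ε) :
    ∃ f, Cd 1 ≫ f = g := by
  obtain ⟨f, hf⟩ := Cd1_surj' ε hε g
  exact ⟨f, fn_ext fun x => hf x⟩

end BN

theorem betti_numbers (ε : RingQuot CRel →ₐ[ℂ] ℂ)
    (hε : ∀ i : Fin 3, ε (RingQuot.mkAlgHom ℂ CRel (ι ℂ i)) = 0) :
    extDim (RingQuot CRel) ε 0 = 1 ∧ extDim (RingQuot CRel) ε 1 = 0 ∧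
    extDim (RingQuot CRel) ε 2 = 0 ∧ extDim (RingQuot CRel) ε 3 = 1 ∧
    ∀ n ≥ 4, extDim (RingQuot CRel) ε n = 0 := by
  have hε' : ∀ i : Fin 3, ε (BN.e i) = 0 := hε
  refine ⟨?_, ?_, ?_, ?_, ?_⟩
  · rw [BN.extDim_one ε hε' 0 ((BN.LC ε).shape _ _ (by simp)) ?_]
    · exact BN.homR ε
    · change (BN.LC ε).d 0 _ = 0
      rw [CochainComplex.next]
      refine ModuleCat.hom_ext (LinearMap.ext fun f => ?_)
      exact (BN.LC_d ε 0 f).trans (BN.Cd0_comp ε hε' f)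
  · refine BN.extDim_zero ε hε' 0 fun f hf => ⟨0, ?_⟩
    rw [BN.Cd1_inj ε hε' f hf, Limits.comp_zero]
  · exact BN.extDim_zero ε hε' 1 fun f _ => BN.Cd1_surj ε hε' f
  · rw [BN.extDim_one ε hε' 3 ?_ ?_]
    · exact BN.homR ε
    · change (BN.LC ε).d _ 3 = 0
      rw [CochainComplex.prev_nat_succ]
      refine ModuleCat.hom_ext (LinearMap.ext fun f => ?_)
      exact (BN.LC_d ε 2 f).trans (BN.Cd2_comp ε hε' f)
    · change (BN.LC ε).d 3 _ = 0
      rw [CochainComplex.next]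
      refine ModuleCat.hom_ext (LinearMap.ext fun f => ?_)
      exact (BN.LC_d ε 3 f).trans Limits.zero_comp
  · intro n hn
    obtain ⟨k, rfl⟩ : ∃ k, n = (k + 3) + 1 := ⟨n - 4, by omega⟩
    refine BN.extDim_zero ε hε' (k + 3) fun f _ => ⟨0, ?_⟩
    refine BN.fn_ext fun x => ?_
    have : x = 0 := rfl
    rw [this]
    exact ((BN.Cd (k + 3) ≫ (0 : _ ⟶ BN.Cmod ε)).hom.map_zero).trans f.hom.map_zero.symm
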